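/- arXiv:2604.00054 — 3 statements merged into one kernel-verified Lean document; each statement's English description precedes it below -/
import Mathlib

section
/- Let b be a prime, m = b², and let χ be a primitive odd Dirichlet character modulo m. Then the Fourier coefficient of the centered collision invariant factorizes as Ŝ°(χ) = −B_{1,χ̄}·conj(S_G(χ))/φ(m), where B_{1,χ̄} is the generalized first Bernoulli number attached to χ̄ and S_G(χ) is the diagonal character sum. -/
open Finset
open scoped Classical

namespace Collision

/-- The diagonal set `G = {n < b² : ⌊n/b⌋ = n mod b}`. -/
def diagSet (b : ℕ) : Finset ℕ :=
  (Finset.range (b ^ 2)).filter (fun n => n / b = n % b)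

/-- The slice increment `d_n(a) = ⌊(n+1)a/b²⌋ − ⌊na/b²⌋`. -/
def d (b n a : ℕ) : ℤ :=
  ((((n + 1) * a) / b ^ 2 : ℕ) : ℤ) - (((n * a) / b ^ 2 : ℕ) : ℤ)

/-- The collision invariant `S(a) = −1 − ⌊a/b⌋ + Σ_{n∈G} d_n(a)`. -/
def S (b a : ℕ) : ℤ :=
  -1 - ((a / b : ℕ) : ℤ) + ∑ n ∈ diagSet b, d b n a

/-- The units `a' ∈ {0,…,b²−1}` with `a' ≡ a (mod b)`. -/
def cosetUnits (b a : ℕ) : Finset ℕ :=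
  (Finset.range (b ^ 2)).filter (fun a' => Nat.gcd a' (b ^ 2) = 1 ∧ a' % b = a % b)

/-- The centered collision invariant `S°(a)`. -/
noncomputable def Scirc (b a : ℕ) : ℝ :=
  (S b a : ℝ) - (1 / (b : ℝ)) * ∑ a' ∈ cosetUnits b a, (S b a' : ℝ)

/-- The Fourier coefficient `Ŝ°(χ) = (1/φ(b²))·Σ_a S°(a)·χ̄(a)`. -/
noncomputable def Shat (b : ℕ) (χ : DirichletCharacter ℂ (b ^ 2)) : ℂ :=
  (1 / (Nat.totient (b ^ 2) : ℂ)) *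
    ∑ a ∈ Finset.range (b ^ 2), (Scirc b a : ℂ) * starRingEnd ℂ (χ (a : ZMod (b ^ 2)))

/-- The generalized first Bernoulli number `B_{1,χ̄} = (1/b²)·Σ_a a·χ̄(a)`. -/
noncomputable def B1bar (b : ℕ) (χ : DirichletCharacter ℂ (b ^ 2)) : ℂ :=
  (1 / ((b : ℂ) ^ 2)) *
    ∑ a ∈ Finset.range (b ^ 2), (a : ℂ) * starRingEnd ℂ (χ (a : ZMod (b ^ 2)))

/-- The diagonal character sum `S_G(χ) = Σ_{n∈G} [χ̄(n+1) − χ̄(n)]`. -/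
noncomputable def SG (b : ℕ) (χ : DirichletCharacter ℂ (b ^ 2)) : ℂ :=
  ∑ n ∈ diagSet b,
    (starRingEnd ℂ (χ ((n + 1 : ℕ) : ZMod (b ^ 2))) - starRingEnd ℂ (χ (n : ZMod (b ^ 2))))

end Collision

/-!
Every function on `ZMod N` with a nonzero period is orthogonal to the primitive characters
modulo `N`. Hence a twist `h (k * ·)` pairs with `χ̄` to `χ k` times the pairing of `h`, also when
`k` is not a unit: then `h (k * ·)` has a nonzero period, and `χ k = 0`.

Writing `⌊x / m⌋` as `x / m` minus a remainder, the linear terms of `S` cancel because the diagonal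
set has `b` elements. What remains is a `b`-periodic function of `a`, orthogonal to `χ̄` like the
average that is subtracted in `S°`, plus the differences of the remainders of `n a` and
`(n + 1) a` modulo `b²`; each of these is a twist of the function behind the Bernoulli number.
-/

namespace Collision

open Function

section PrimitiveCharacter

variable {N : ℕ} [NeZero N]

section CommMonoidWithZero

variable {R : Type*} [CommMonoidWithZero R] {χ : DirichletCharacter R N}

lemma exists_unitsMap_eq_one_and_apply_ne_one (hχ : χ.IsPrimitive) {d : ℕ} (hd : d ∣ N)
    (hne : d ≠ N) : ∃ u : (ZMod N)ˣ, ZMod.unitsMap hd u = 1 ∧ χ u ≠ 1 := by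
  by_contra! h
  have hfactors : χ.FactorsThrough d := by
    rw [DirichletCharacter.factorsThrough_iff_ker_unitsMap hd]
    intro u hu
    exact Units.ext ((MulChar.coe_toUnitHom χ u).trans (h u hu))
  have hdvd : χ.conductor ∣ d := χ.conductor_dvd_of_mem_conductorSet hfactors
  rw [χ.isPrimitive_def.1 hχ] at hdvd
  exact hne (Nat.dvd_antisymm hd hdvd)

lemma natCast_dvd_sub_one_of_unitsMap_eq_one {d : ℕ} (hd : d ∣ N) {u : (ZMod N)ˣ}
    (hu : ZMod.unitsMap hd u = 1) : (d : ZMod N) ∣ (u : ZMod N) - 1 := by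
  have hcast : ZMod.castHom hd (ZMod d) ((u : ZMod N) - 1) = 0 := by
    rw [map_sub, map_one, sub_eq_zero]
    exact congrArg Units.val hu
  have hval : d ∣ ((u : ZMod N) - 1).val := by
    rwa [← ZMod.natCast_eq_zero_iff, ZMod.natCast_val]
  simpa only [ZMod.natCast_zmod_val] using Nat.cast_dvd_cast (α := ZMod N) hval

lemma exists_unit_dvd_sub_one_and_apply_ne_one (hχ : χ.IsPrimitive) {t : ZMod N} (ht : t ≠ 0) :
    ∃ u : (ZMod N)ˣ, t ∣ (u : ZMod N) - 1 ∧ χ u ≠ 1 := by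
  have hgcd : t.val.gcd N ∣ N := Nat.gcd_dvd_right _ _
  have hne : t.val.gcd N ≠ N := fun h ↦
    ht ((ZMod.val_eq_zero t).1 (Nat.eq_zero_of_dvd_of_lt (Nat.gcd_eq_right_iff_dvd.1 h) t.val_lt))
  obtain ⟨u, hu, hχu⟩ := exists_unitsMap_eq_one_and_apply_ne_one hχ hgcd hne
  have htgcd : t ∣ (t.val.gcd N : ZMod N) := ⟨t⁻¹, (ZMod.mul_inv_eq_gcd t).symm⟩
  exact ⟨u, htgcd.trans (natCast_dvd_sub_one_of_unitsMap_eq_one hgcd hu), hχu⟩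

end CommMonoidWithZero

variable {R : Type*} [CommRing R] [IsDomain R] {χ : DirichletCharacter R N}

lemma sum_mul_eq_zero_of_periodic (hχ : χ.IsPrimitive) {f : ZMod N → R} {t : ZMod N}
    (hf : Periodic f t) (ht : t ≠ 0) : ∑ x, f x * χ x = 0 := by
  obtain ⟨u, ⟨c, hc⟩, hχu⟩ := exists_unit_dvd_sub_one_and_apply_ne_one hχ ht
  have hfu (x : ZMod N) : f (u * x) = f x := by
    have hux : (u : ZMod N) * x = x + (c * x).val • t := by
      rw [nsmul_eq_mul, ZMod.natCast_zmod_val]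
      linear_combination x * hc
    rw [hux, hf.nsmul]
  have hinv : χ u * ∑ x, f x * χ x = ∑ x, f x * χ x := by
    conv_rhs => rw [← Equiv.sum_comp (Units.mulLeft u)]
    simp only [Units.mulLeft_apply, hfu, map_mul, Finset.mul_sum, mul_left_comm]
  by_contra hsum
  exact hχu ((mul_eq_right₀ hsum).1 hinv)

lemma sum_comp_mul_left_mul_inv (hχ : χ.IsPrimitive) (h : ZMod N → R) (k : ZMod N) :
    ∑ x, h (k * x) * χ⁻¹ x = χ k * ∑ x, h x * χ⁻¹ x := by
  by_cases hk : IsUnit k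
  · obtain ⟨v, rfl⟩ := hk
    have hv : χ v * χ⁻¹ v = 1 := by
      rw [← MulChar.mul_apply, mul_inv_cancel, MulChar.one_apply v.isUnit]
    conv_rhs => rw [← Equiv.sum_comp (Units.mulLeft v), Finset.mul_sum]
    refine Finset.sum_congr rfl fun x _ ↦ ?_
    rw [Units.mulLeft_apply, map_mul]
    linear_combination -(h (v * x) * χ⁻¹ x) * hv
  · obtain ⟨t, hkt, ht⟩ : ∃ t, k * t = 0 ∧ t ≠ 0 := by
      rw [isUnit_iff_mem_nonZeroDivisors_of_finite, mem_nonZeroDivisors_iff_left] at hk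
      push Not at hk
      exact hk
    have hperiodic : Periodic (fun x ↦ h (k * x)) t := fun x ↦ by
      simp only [mul_add, hkt, add_zero]
    rw [MulChar.map_nonunit χ hk, zero_mul]
    exact sum_mul_eq_zero_of_periodic (χ.conductor_inv.trans hχ) hperiodic ht

end PrimitiveCharacter

section RangeSum

variable {N : ℕ} [NeZero N]

lemma sum_range_eq_sum_zmod {M : Type*} [AddCommMonoid M] (f : ℕ → M) :
    ∑ a ∈ range N, f a = ∑ x : ZMod N, f x.val :=
  Finset.sum_nbij' (fun a ↦ (a : ZMod N)) ZMod.val (fun _ _ ↦ mem_univ _)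
    (fun x _ ↦ mem_range.2 x.val_lt) (fun _ ha ↦ ZMod.val_natCast_of_lt (mem_range.1 ha))
    (fun x _ ↦ x.natCast_zmod_val)
    (fun _ ha ↦ by rw [ZMod.val_natCast_of_lt (mem_range.1 ha)])

lemma periodic_comp_zmod_val {α : Type*} {f : ℕ → α} {d : ℕ} (hf : Periodic f d) (hd : d ∣ N) :
    Periodic (fun x : ZMod N ↦ f x.val) (d : ZMod N) := by
  intro x
  change f (x + d).val = f x.val
  rw [← hf.map_mod_nat, ← hf.map_mod_nat x.val, ZMod.val_add, ZMod.val_natCast,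
    Nat.mod_mod_of_dvd _ hd, Nat.add_mod, Nat.mod_mod_of_dvd _ hd, Nat.mod_self, add_zero,
    Nat.mod_mod]

variable {R : Type*} [CommRing R] [IsDomain R] {χ : DirichletCharacter R N}

lemma sum_range_mul_eq_zero_of_periodic (hχ : χ.IsPrimitive) {f : ℕ → R} {d : ℕ}
    (hf : Periodic f d) (hd : d ∣ N) (hne : d ≠ N) : ∑ a ∈ range N, f a * χ a = 0 := by
  have hd0 : (d : ZMod N) ≠ 0 := fun h ↦
    hne (Nat.dvd_antisymm hd ((ZMod.natCast_eq_zero_iff d N).1 h))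
  rw [sum_range_eq_sum_zmod]
  simpa only [ZMod.natCast_zmod_val] using
    sum_mul_eq_zero_of_periodic hχ (periodic_comp_zmod_val hf hd) hd0

lemma sum_range_mul_mod_mul_inv (hχ : χ.IsPrimitive) (k : ℕ) :
    ∑ a ∈ range N, ((k * a % N : ℕ) : R) * χ⁻¹ a = χ k * ∑ a ∈ range N, (a : R) * χ⁻¹ a := by
  have hval (x : ZMod N) : k * x.val % N = ((k : ZMod N) * x).val := by
    rw [ZMod.val_mul, ZMod.val_natCast, Nat.mod_mul_mod]
  simpa only [sum_range_eq_sum_zmod, ZMod.natCast_zmod_val, hval] using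
    sum_comp_mul_left_mul_inv hχ (fun x ↦ (x.val : R)) k

end RangeSum

lemma cast_div_eq_sub_mod_div {K : Type*} [DivisionRing K] [CharZero K] (a m : ℕ) (hm : m ≠ 0) :
    ((a / m : ℕ) : K) = (a - (a % m : ℕ)) / m := by
  rw [eq_div_iff (Nat.cast_ne_zero.2 hm), eq_sub_iff_add_eq]
  exact_mod_cast Nat.div_add_mod' a m

section CollisionInvariant

variable {b : ℕ}

lemma card_diagSet (hb : 0 < b) : (diagSet b).card = b := by
  conv_rhs => rw [← card_range b]
  refine Finset.card_nbij' (· % b) (fun k ↦ b * k + k) ?_ ?_ ?_ ?_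
  · intro n _
    exact mem_range.2 (Nat.mod_lt n hb)
  · intro k hk
    have hkb : k < b := mem_range.1 hk
    refine mem_filter.2 ⟨mem_range.2 (by nlinarith), ?_⟩
    rw [Nat.mul_add_div hb, Nat.mul_add_mod, Nat.div_eq_of_lt hkb, Nat.mod_eq_of_lt hkb, add_zero]
  · intro n hn
    have hdiag : n / b = n % b := (mem_filter.1 hn).2
    simpa only [hdiag] using Nat.div_add_mod n b
  · intro k hk
    simp only [Nat.mul_add_mod, Nat.mod_eq_of_lt (mem_range.1 hk)]

lemma cast_d (hb : b ≠ 0) (n a : ℕ) :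
    (d b n a : ℂ) = a / (b : ℂ) ^ 2 +
      (((n * a % b ^ 2 : ℕ) : ℂ) - ((n + 1) * a % b ^ 2 : ℕ)) / (b : ℂ) ^ 2 := by
  have hb2 : b ^ 2 ≠ 0 := pow_ne_zero 2 hb
  rw [d, Int.cast_sub, Int.cast_natCast, Int.cast_natCast, cast_div_eq_sub_mod_div _ _ hb2,
    cast_div_eq_sub_mod_div _ _ hb2]
  simp only [Nat.cast_mul, Nat.cast_add, Nat.cast_one, Nat.cast_pow]
  ring

lemma cast_S (hb : b ≠ 0) (a : ℕ) :
    (S b a : ℂ) = (-1 + ((a % b : ℕ) : ℂ) / b) +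
      ∑ n ∈ diagSet b, (((n * a % b ^ 2 : ℕ) : ℂ) - ((n + 1) * a % b ^ 2 : ℕ)) / (b : ℂ) ^ 2 := by
  have hb' : (b : ℂ) ≠ 0 := Nat.cast_ne_zero.2 hb
  have hlinear : ∑ _n ∈ diagSet b, (a : ℂ) / (b : ℂ) ^ 2 = a / b := by
    rw [sum_const, card_diagSet (Nat.pos_of_ne_zero hb), nsmul_eq_mul]
    field_simp
  rw [S, Int.cast_add, Int.cast_sum, sum_congr rfl fun n _ ↦ cast_d hb n a, sum_add_distrib,
    hlinear, Int.cast_sub, Int.cast_natCast, cast_div_eq_sub_mod_div _ _ hb]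
  push_cast
  ring

lemma periodic_cosetUnits (b : ℕ) : Periodic (cosetUnits b) b := by
  intro a
  simp only [cosetUnits, Nat.add_mod_right]

variable {χ : DirichletCharacter ℂ (b ^ 2)}

lemma sum_mul_inv_eq_zero_of_periodic (hb : 1 < b) (hχ : χ.IsPrimitive) {f : ℕ → ℂ}
    (hf : Periodic f b) : ∑ a ∈ range (b ^ 2), f a * χ⁻¹ a = 0 := by
  have : NeZero b := ⟨by lia⟩
  exact sum_range_mul_eq_zero_of_periodic (χ.conductor_inv.trans hχ) hf
    (dvd_pow_self b two_ne_zero) (lt_self_pow₀ hb one_lt_two).ne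

lemma sum_Scirc_mul_inv (hb : 1 < b) (hχ : χ.IsPrimitive) :
    ∑ a ∈ range (b ^ 2), (Scirc b a : ℂ) * χ⁻¹ a = ∑ a ∈ range (b ^ 2), (S b a : ℂ) * χ⁻¹ a := by
  have hperiodic : Periodic (fun a ↦ 1 / (b : ℂ) * ∑ a' ∈ cosetUnits b a, (S b a' : ℂ)) b :=
    fun a ↦ by simp only [periodic_cosetUnits b a]
  have hcast (a : ℕ) :
      (Scirc b a : ℂ) = S b a - 1 / (b : ℂ) * ∑ a' ∈ cosetUnits b a, (S b a' : ℂ) := by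
    rw [Scirc]
    push_cast
    rfl
  simp only [hcast, sub_mul, sum_sub_distrib, sum_mul_inv_eq_zero_of_periodic hb hχ hperiodic,
    sub_zero]

lemma B1bar_eq_sum_inv :
    B1bar b χ = 1 / (b : ℂ) ^ 2 * ∑ a ∈ range (b ^ 2), (a : ℂ) * χ⁻¹ a := by
  simp only [B1bar, starRingEnd_apply, MulChar.star_apply']

lemma conj_SG : starRingEnd ℂ (SG b χ) = ∑ n ∈ diagSet b, (χ (n + 1 : ℕ) - χ n) := by
  simp only [SG, map_sum, map_sub, Complex.conj_conj]

lemma sum_remainder_sub_mul_inv (hb : b ≠ 0) (hχ : χ.IsPrimitive) (n : ℕ) :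
    ∑ a ∈ range (b ^ 2),
      (((n * a % b ^ 2 : ℕ) : ℂ) - ((n + 1) * a % b ^ 2 : ℕ)) / (b : ℂ) ^ 2 * χ⁻¹ a =
    -(B1bar b χ * (χ (n + 1 : ℕ) - χ n)) := by
  have : NeZero b := ⟨hb⟩
  simp only [div_mul_eq_mul_div, sub_mul, ← sum_div, sum_sub_distrib,
    sum_range_mul_mod_mul_inv hχ, B1bar_eq_sum_inv]
  ring

lemma sum_S_mul_inv (hb : 1 < b) (hχ : χ.IsPrimitive) :
    ∑ a ∈ range (b ^ 2), (S b a : ℂ) * χ⁻¹ a = -(B1bar b χ * starRingEnd ℂ (SG b χ)) := by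
  have hb0 : b ≠ 0 := by lia
  have hperiodic : Periodic (fun a ↦ -1 + ((a % b : ℕ) : ℂ) / b) b := fun a ↦ by
    simp only [Nat.add_mod_right]
  rw [sum_congr rfl fun a _ ↦ by rw [cast_S hb0, add_mul, sum_mul], sum_add_distrib,
    sum_mul_inv_eq_zero_of_periodic hb hχ hperiodic, zero_add, sum_comm, conj_SG, mul_sum,
    ← sum_neg_distrib]
  exact sum_congr rfl fun n _ ↦ sum_remainder_sub_mul_inv hb0 hχ n

end CollisionInvariant

end Collision

open Collision in
theorem stmt0_general (b : ℕ) (hb : 1 < b) (χ : DirichletCharacter ℂ (b ^ 2))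
    (hprim : χ.IsPrimitive) :
    Shat b χ = -(B1bar b χ * starRingEnd ℂ (SG b χ)) / (Nat.totient (b ^ 2) : ℂ) := by
  simp only [Shat, starRingEnd_apply (χ _), MulChar.star_apply']
  rw [sum_Scirc_mul_inv hb hprim, sum_S_mul_inv hb hprim, one_div_mul_eq_div]

open Collision in
theorem stmt0 (b : ℕ) (hb : b.Prime) (χ : DirichletCharacter ℂ (b ^ 2))
    (hprim : χ.IsPrimitive) (hodd : χ.Odd) :
    Shat b χ = -(B1bar b χ * starRingEnd ℂ (SG b χ)) / (Nat.totient (b ^ 2) : ℂ) :=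
  stmt0_general b hb.one_lt χ hprim
end

section
/- Let b be a prime, m = b², and let χ be a primitive Dirichlet character modulo m. Then Σ_{a=0}^{m−1} χ̄(a)·{a/b} = 0, and consequently Σ_{a=0}^{m−1} χ̄(a)·⌊a/b⌋ = b·B_{1,χ̄}, where {x} denotes the fractional part. -/
open Finset
open scoped Classical

/-!
If `χ` modulo `m` does not factor through `b ∣ m`, some unit `u ≡ 1 [ZMOD b]` has `χ u ≠ 1`.
Multiplication by `u` permutes `ℤ/m` and preserves residues modulo `b`, so `χ u` times the sum of
`χ a * f (a mod b)` is that same sum, which therefore vanishes. Both formulas follow from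
`f r = r / b` and `a = b * ⌊a / b⌋ + a mod b`.
-/

theorem sum_range_natCast_zmod {M : Type*} [AddCommMonoid M] (n : ℕ) [NeZero n]
    (F : ZMod n → M) : ∑ a ∈ range n, F a = ∑ x, F x := by
  obtain ⟨k, rfl⟩ := Nat.exists_eq_succ_of_ne_zero (NeZero.ne n)
  rw [sum_range]
  exact Fintype.sum_congr _ _ fun i ↦ congrArg F (Fin.cast_val_eq_self i)

theorem sum_mulChar_mul_eq_zero_of_invariant {M R : Type*} [CommMonoid M] [Fintype M] [CommRing R]
    [NoZeroDivisors R] {χ : MulChar M R} {f : M → R} {u : Mˣ} (hχ : χ u ≠ 1)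
    (hf : ∀ x, f (u * x) = f x) : ∑ x, χ x * f x = 0 := by
  refine eq_zero_of_mul_eq_self_left hχ ?_
  calc χ u * ∑ x, χ x * f x
    _ = ∑ x, χ (u * x) * f (u * x) := by simp only [mul_sum, map_mul, hf, mul_assoc]
    _ = ∑ x, χ x * f x := u.mulLeft_bijective.sum_comp fun x ↦ χ x * f x

section DirichletCharacter

variable {R : Type*} [CommRing R] {m b : ℕ} {χ : DirichletCharacter R m}

theorem isPrimitive_inv (hχ : χ.IsPrimitive) : χ⁻¹.IsPrimitive :=
  χ.conductor_inv.trans hχ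

theorem not_factorsThrough_of_isPrimitive (hχ : χ.IsPrimitive) (hbm : b < m) :
    ¬ χ.FactorsThrough b := fun h ↦
  hbm.not_ge <| hχ ▸ Nat.sInf_le h

variable [NeZero m]

theorem exists_unit_castHom_eq_one_of_not_factorsThrough (hbm : b ∣ m)
    (hχ : ¬ χ.FactorsThrough b) :
    ∃ u : (ZMod m)ˣ, ZMod.castHom hbm (ZMod b) u = 1 ∧ χ u ≠ 1 := by
  rw [DirichletCharacter.factorsThrough_iff_ker_unitsMap hbm] at hχ
  obtain ⟨u, hu, huχ⟩ := SetLike.not_le_iff_exists.mp hχ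
  refine ⟨u, congrArg Units.val (MonoidHom.mem_ker.mp hu), fun h ↦ huχ ?_⟩
  exact MonoidHom.mem_ker.mpr (Units.ext h)

variable [NoZeroDivisors R]

theorem sum_mul_mod_eq_zero_of_not_factorsThrough (hbm : b ∣ m) (hχ : ¬ χ.FactorsThrough b)
    (f : ℕ → R) : ∑ a ∈ range m, χ a * f (a % b) = 0 := by
  obtain ⟨u, hu, hχu⟩ := exists_unit_castHom_eq_one_of_not_factorsThrough hbm hχ
  let residue : ZMod m → ℕ := fun x ↦ (ZMod.castHom hbm (ZMod b) x).val
  have residue_mul (x : ZMod m) : residue (u * x) = residue x := by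
    simp only [residue, map_mul, hu, one_mul]
  have residue_natCast (a : ℕ) : residue a = a % b := by
    simp only [residue, map_natCast, ZMod.val_natCast]
  calc ∑ a ∈ range m, χ a * f (a % b)
    _ = ∑ x, χ x * f (residue x) := by
      simp only [← sum_range_natCast_zmod, residue_natCast]
    _ = 0 := sum_mulChar_mul_eq_zero_of_invariant hχu fun x ↦ congrArg f (residue_mul x)

theorem sum_natCast_mul_eq_mul_sum_mul_div (hbm : b ∣ m) (hχ : ¬ χ.FactorsThrough b) :
    ∑ a ∈ range m, a * χ a = (b : R) * ∑ a ∈ range m, χ a * ((a / b : ℕ) : R) := by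
  have euclid (a : ℕ) : (a : R) = b * (a / b : ℕ) + (a % b : ℕ) := by
    rw [← Nat.cast_mul, ← Nat.cast_add, Nat.div_add_mod]
  calc ∑ a ∈ range m, (a : R) * χ a
    _ = ∑ a ∈ range m, (b * (χ a * (a / b : ℕ)) + χ a * (a % b : ℕ)) :=
      sum_congr rfl fun a _ ↦ by linear_combination χ a * euclid a
    _ = b * ∑ a ∈ range m, χ a * (a / b : ℕ) := by
      rw [sum_add_distrib, ← mul_sum, sum_mul_mod_eq_zero_of_not_factorsThrough hbm hχ, add_zero]

end DirichletCharacter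

/-- The generalized first Bernoulli number `B_{1,χ}` of a Dirichlet character of arbitrary level;
`Collision.B1bar b χ` is its value at `χ⁻¹ = χ̄` for level `b ^ 2`.
At level `1` this formula gives `0` instead of the customary `±1/2`. -/
noncomputable def bernoulliOne {m : ℕ} (χ : DirichletCharacter ℂ m) : ℂ :=
  1 / m * ∑ a ∈ range m, a * χ a

theorem starRingEnd_apply_eq_inv_apply {m : ℕ} (χ : DirichletCharacter ℂ m) (x : ZMod m) :
    starRingEnd ℂ (χ x) = χ⁻¹ x :=
  χ.star_apply' x

theorem B1bar_eq_bernoulliOne_inv (b : ℕ) (χ : DirichletCharacter ℂ (b ^ 2)) :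
    Collision.B1bar b χ = bernoulliOne χ⁻¹ := by
  simp only [Collision.B1bar, bernoulliOne, starRingEnd_apply_eq_inv_apply, Nat.cast_pow]

theorem stmt6_general {m b : ℕ} [NeZero m] (hbm : b ∣ m) (χ : DirichletCharacter ℂ m)
    (hχ : ¬ χ.FactorsThrough b) :
    (∑ a ∈ range m, χ a * Complex.ofReal (Int.fract ((a : ℝ) / (b : ℝ))) = 0) ∧
    (∑ a ∈ range m, χ a * ((a / b : ℕ) : ℂ) = (m : ℂ) / b * bernoulliOne χ) := by
  have hm : (m : ℂ) ≠ 0 := NeZero.ne _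
  have hb : (b : ℂ) ≠ 0 := by exact_mod_cast ne_zero_of_dvd_ne_zero (NeZero.ne m) hbm
  constructor
  · simpa [Int.fract_div_natCast_eq_div_natCast_mod] using
      sum_mul_mod_eq_zero_of_not_factorsThrough hbm hχ fun r ↦ (r : ℂ) / b
  · rw [bernoulliOne, sum_natCast_mul_eq_mul_sum_mul_div hbm hχ]
    field_simp

open Collision in
theorem stmt6 (b : ℕ) (hb : b.Prime) (χ : DirichletCharacter ℂ (b ^ 2))
    (hprim : χ.IsPrimitive) :
    (∑ a ∈ Finset.range (b ^ 2),
        starRingEnd ℂ (χ (a : ZMod (b ^ 2))) * (Complex.ofReal (Int.fract ((a : ℝ) / (b : ℝ)))) = 0) ∧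
    (∑ a ∈ Finset.range (b ^ 2),
        starRingEnd ℂ (χ (a : ZMod (b ^ 2))) * ((a / b : ℕ) : ℂ) = (b : ℂ) * B1bar b χ) := by
  have : NeZero b := ⟨hb.ne_zero⟩
  have hχ := not_factorsThrough_of_isPrimitive (isPrimitive_inv hprim)
    (lt_self_pow₀ hb.one_lt one_lt_two)
  simpa [starRingEnd_apply_eq_inv_apply, B1bar_eq_bernoulliOne_inv, pow_two] using
    stmt6_general (dvd_pow_self b two_ne_zero) χ⁻¹ hχ
end

section
/- Let b be a prime, m = b², and let χ be a Dirichlet character modulo m that is induced by a character ψ modulo b (i.e., χ is not primitive, so χ(a) = ψ(a mod b) for all a with gcd(a,m) = 1). Then the diagonal character sum vanishes: S_G(χ) = 0. -/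
open Finset
open scoped Classical

/-!
The set `G` consists of the multiples `(b + 1) * k` with `k < b`, and `(b + 1) * k ≡ k` modulo `b`.
As `b` and `b²` have the same prime factors, `χ` agrees with `ψ` on all integers, units or not, so
`S_G(χ)` telescopes to the conjugate of `ψ(b) - ψ(0)`, which is zero.
-/

namespace Collision

open DirichletCharacter

theorem changeLevel_intCast_of_dvd_pow {R : Type*} [CommMonoidWithZero R] {m n k : ℕ}
    (hmn : m ∣ n) (hnm : n ∣ m ^ k) (ψ : DirichletCharacter R m) (a : ℤ) :
    changeLevel hmn ψ a = ψ a := by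
  by_cases ha : IsCoprime a m
  · have han : IsCoprime a n :=
      (ha.pow_right (n := k)).of_isCoprime_of_dvd_right (mod_cast hnm)
    exact changeLevel_eq_cast_of_dvd' ψ hmn han
  · have han : ¬ IsCoprime a n := fun h ↦ ha (h.of_isCoprime_of_dvd_right (mod_cast hmn))
    rw [isCoprime_comm, ← ZMod.coe_int_isUnit_iff_isCoprime] at ha han
    rw [MulChar.map_nonunit _ han, MulChar.map_nonunit _ ha]

theorem diagSet_eq_image (b : ℕ) : diagSet b = (range b).image fun k ↦ (b + 1) * k := by
  ext n
  simp only [diagSet, mem_filter, mem_range, mem_image]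
  constructor
  · rintro ⟨hn, hdiag⟩
    have hb : 0 < b := Nat.pos_of_ne_zero fun hb ↦ by simp [hb] at hn
    refine ⟨n % b, Nat.mod_lt n hb, ?_⟩
    calc (b + 1) * (n % b) = b * (n / b) + n % b := by rw [hdiag]; ring
      _ = n := Nat.div_add_mod n b
  · rintro ⟨k, hk, rfl⟩
    have hb : 0 < b := Nat.zero_lt_of_lt hk
    refine ⟨by nlinarith, ?_⟩
    rw [add_one_mul, Nat.mul_add_div hb, Nat.mul_add_mod, Nat.div_eq_of_lt hk,
      Nat.mod_eq_of_lt hk, add_zero]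

theorem sum_diagSet {M : Type*} [AddCommMonoid M] (b : ℕ) (f : ℕ → M) :
    ∑ n ∈ diagSet b, f n = ∑ k ∈ range b, f ((b + 1) * k) := by
  rw [diagSet_eq_image, sum_image (mul_right_injective₀ b.succ_ne_zero).injOn]

theorem sum_diagSet_sub_eq_zero {A : Type*} [AddCommGroup A] (b : ℕ) (f : ZMod b → A) :
    ∑ n ∈ diagSet b, (f (n + 1 : ℕ) - f n) = 0 := by
  calc ∑ n ∈ diagSet b, (f (n + 1 : ℕ) - f n)
      = ∑ k ∈ range b, (f (k + 1 : ℕ) - f k) := by simp [sum_diagSet]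
    _ = f b - f (0 : ℕ) := sum_range_sub (fun k : ℕ ↦ f k) b
    _ = 0 := by simp

end Collision

open Collision in
theorem stmt10_general (b : ℕ) (χ : DirichletCharacter ℂ (b ^ 2)) (ψ : DirichletCharacter ℂ b)
    (hχ : χ = DirichletCharacter.changeLevel (dvd_pow_self b two_ne_zero) ψ) :
    SG b χ = 0 := by
  have hχψ (n : ℕ) : χ n = ψ n := by
    rw [hχ]
    exact mod_cast changeLevel_intCast_of_dvd_pow (dvd_pow_self b two_ne_zero) dvd_rfl ψ n
  simp only [SG, hχψ]
  exact sum_diagSet_sub_eq_zero b fun a ↦ starRingEnd ℂ (ψ a)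

open Collision in
theorem stmt10 (b : ℕ) (hb : b.Prime) (χ : DirichletCharacter ℂ (b ^ 2))
    (ψ : DirichletCharacter ℂ b)
    (hχ : χ = DirichletCharacter.changeLevel (dvd_pow_self b two_ne_zero) ψ) :
    SG b χ = 0 :=
  stmt10_general b χ ψ hχ
end
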